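/- arXiv:1710.05585 — 2 statements merged into one kernel-verified Lean document; each statement's English description precedes it below -/
import Mathlib

section
/- Let N ≥ 1 and for each i ∈ {1,…,N} let Σ_i be a discrete-time control subsystem with state set X_i, external input set U_i, internal input set W_i ⊆ ℝ^{p_i}, set-valued transition map f_i : X_i × U_i × W_i ⇒ X_i, external output map h_{1i} : X_i → ℝ^{r_i} and internal output map h_{2i} : X_i → ℝ^{q_i}; similarly let Σ̂_i be an abstraction with hatted data and internal output maps ĥ_{2i} : X̂_i → ℝ^{q̂_i}. Suppose for each i there is a storage function S_i from Σ̂_i to Σ_i with associated α_i, σ_i ∈ K∞, ρ_{i,ext} ∈ K∞ ∪ {0}, matrices W_i, Ŵ_i, H_i, symmetric matrix X_i with conformal blocks X_i^{11}, X_i^{12}, X_i^{21}, X_i^{22}, and constant ε_i ≥ 0. Let M be a coupling matrix for Σ = I(Σ_1,…,Σ_N) with M·∏_i Y_{2i} ⊆ ∏_i W_i, and let M̂ be a matrix with M̂·∏_i Ŷ_{2i} ⊆ ∏_i Ŵ_i, defining Σ̂ = I(Σ̂_1,…,Σ̂_N). Set W = diag(W_1,…,W_N), Ŵ = diag(Ŵ_1,…,Ŵ_N),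 H = diag(H_1,…,H_N), and let X(μ_1X_1,…,μ_NX_N) denote the symmetric matrix whose (1,1)-block is diag(μ_1X_1^{11},…,μ_NX_N^{11}), (1,2)-block diag(μ_1X_1^{12},…,μ_NX_N^{12}), (2,1)-block diag(μ_1X_1^{21},…,μ_NX_N^{21}), and (2,2)-block diag(μ_1X_1^{22},…,μ_NX_N^{22}). If there exist μ_1,…,μ_N > 0 such that (i) [WM; I_q]ᵀ · X(μ_1X_1,…,μ_NX_N) · [WM; I_q] ⪯ 0 (q the number of rows of H) and (ii) WMH = ŴM̂, then V(x,x̂) := Σ_{i=1}^N μ_i S_i(x_i,x̂_i) is a simulation function from the interconnected abstraction Σ̂ = I(Σ̂_1,…,Σ̂_N) to the interconnected concrete system Σ = I(Σ_1,…,Σ_N). -/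
/-!
Multiply the dissipation inequality of the `i`-th subsystem by `μᵢ` and sum. With the stacked
output mismatch `z = h₂(x) - H ĥ₂(x̂)`, the condition `W M H = Ŵ M̂` turns the stacked input
mismatch `W w - Ŵ ŵ` into `W M z`, so the weighted supply rates add up to the quadratic form of
`[WM; I]ᵀ X(μ₁X₁,…,μ_NX_N) [WM; I]` at `z`, which is nonpositive.

Both comparison functions `α` and `σ` of the interconnection come from one fact: for finitely many
class-K∞ functions `gᵢ` there is a class-K∞ function `τ` with `τ(∑ᵢ vᵢ) ≤ ∑ᵢ gᵢ(vᵢ)` for all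
`vᵢ ≥ 0`.
-/

open Filter Matrix

/-- A class-K function: continuous, strictly increasing on `[0,∞)`, and vanishing at `0`. -/
def ClassK (f : ℝ → ℝ) : Prop :=
  ContinuousOn f (Set.Ici 0) ∧ StrictMonoOn f (Set.Ici 0) ∧ f 0 = 0

/-- A class-K∞ function: a class-K function that is unbounded. -/
def ClassKInf (f : ℝ → ℝ) : Prop :=
  ClassK f ∧ Tendsto f atTop atTop

/-! ### Comparison functions -/

lemma ClassK.monotoneOn {g : ℝ → ℝ} (hg : ClassK g) : MonotoneOn g (Set.Ici 0) :=
  hg.2.1.monotoneOn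

lemma ClassK.nonneg {g : ℝ → ℝ} (hg : ClassK g) {s : ℝ} (hs : 0 ≤ s) : 0 ≤ g s :=
  hg.2.2 ▸ hg.monotoneOn Set.self_mem_Ici hs hs

namespace ClassKInf

variable {g h : ℝ → ℝ}

protected lemma id : ClassKInf id :=
  ⟨⟨continuousOn_id, strictMonoOn_id, rfl⟩, tendsto_id⟩

lemma add (hg : ClassKInf g) (hh : ClassKInf h) : ClassKInf (g + h) := by
  refine ⟨⟨hg.1.1.add hh.1.1, fun a ha b hb hab => ?_, ?_⟩, hg.2.atTop_add_atTop hh.2⟩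
  · exact add_lt_add (hg.1.2.1 ha hb hab) (hh.1.2.1 ha hb hab)
  · rw [Pi.add_apply, hg.1.2.2, hh.1.2.2, add_zero]

lemma inf (hg : ClassKInf g) (hh : ClassKInf h) : ClassKInf (g ⊓ h) := by
  refine ⟨⟨hg.1.1.inf hh.1.1, fun a ha b hb hab => ?_, ?_⟩, tendsto_atTop.2 fun c => ?_⟩
  · exact min_lt_min (hg.1.2.1 ha hb hab) (hh.1.2.1 ha hb hab)
  · rw [Pi.inf_apply, hg.1.2.2, hh.1.2.2, inf_idem]
  · filter_upwards [hg.2.eventually_ge_atTop c, hh.2.eventually_ge_atTop c] with s hgs hhs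
    exact le_inf hgs hhs

lemma const_smul (hg : ClassKInf g) {a : ℝ} (ha : 0 < a) : ClassKInf (a • g) := by
  refine ⟨⟨hg.1.1.const_smul a, fun s hs s' hs' h => ?_, ?_⟩, hg.2.const_mul_atTop ha⟩
  · exact mul_lt_mul_of_pos_left (hg.1.2.1 hs hs' h) ha
  · rw [Pi.smul_apply, hg.1.2.2, smul_zero]

lemma comp_const_mul (hg : ClassKInf g) {b : ℝ} (hb : 0 < b) : ClassKInf fun s => g (b * s) := by
  have hmaps : Set.MapsTo (b * ·) (Set.Ici 0) (Set.Ici 0) := fun s hs => mul_nonneg hb.le hs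
  refine ⟨⟨hg.1.1.comp (by fun_prop) hmaps, fun s hs s' hs' h => ?_, ?_⟩,
    hg.2.comp (tendsto_id.const_mul_atTop hb)⟩
  · exact hg.1.2.1 (hmaps hs) (hmaps hs') (mul_lt_mul_of_pos_left h hb)
  · simp only [mul_zero, hg.1.2.2]

lemma exists_add_le (hg : ClassKInf g) (hh : ClassKInf h) :
    ∃ τ, ClassKInf τ ∧ ∀ a b, 0 ≤ a → 0 ≤ b → τ (a + b) ≤ g a + h b := by
  refine ⟨_, (hg.inf hh).comp_const_mul (b := 2⁻¹) (by norm_num), fun a b ha hb => ?_⟩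
  have hmean : 2⁻¹ * (a + b) ∈ Set.Ici 0 := Set.mem_Ici.2 (by positivity)
  -- the mean of `a` and `b` is at most the larger of the two
  rcases le_total a b with hab | hba
  · calc (g ⊓ h) (2⁻¹ * (a + b)) ≤ h (2⁻¹ * (a + b)) := inf_le_right
      _ ≤ h b := hh.1.monotoneOn hmean hb (by linarith)
      _ ≤ g a + h b := le_add_of_nonneg_left (hg.1.nonneg ha)
  · calc (g ⊓ h) (2⁻¹ * (a + b)) ≤ g (2⁻¹ * (a + b)) := inf_le_left
      _ ≤ g a := hg.1.monotoneOn hmean ha (by linarith)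
      _ ≤ g a + h b := le_add_of_nonneg_right (hh.1.nonneg hb)

lemma exists_sum_le {ι : Type*} {s : Finset ι} {g : ι → ℝ → ℝ} (hg : ∀ i ∈ s, ClassKInf (g i)) :
    ∃ τ, ClassKInf τ ∧
      ∀ v : ι → ℝ, (∀ i ∈ s, 0 ≤ v i) → τ (∑ i ∈ s, v i) ≤ ∑ i ∈ s, g i (v i) := by
  classical
  induction s using Finset.induction_on with
  | empty => exact ⟨id, ClassKInf.id, fun v _ => by simp⟩
  | insert a s has ih =>
    rw [Finset.forall_mem_insert] at hg
    obtain ⟨τ, hτ, hτle⟩ := ih hg.2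
    obtain ⟨τ', hτ', hτ'le⟩ := hg.1.exists_add_le hτ
    refine ⟨τ', hτ', fun v hv => ?_⟩
    rw [Finset.forall_mem_insert] at hv
    rw [Finset.sum_insert has, Finset.sum_insert has]
    calc τ' (v a + ∑ i ∈ s, v i) ≤ g a (v a) + τ (∑ i ∈ s, v i) :=
          hτ'le _ _ hv.1 (Finset.sum_nonneg hv.2)
      _ ≤ g a (v a) + ∑ i ∈ s, g i (v i) := by gcongr; exact hτle v hv.2

lemma exists_weighted_sum_le {ι : Type*} {s : Finset ι} {g : ι → ℝ → ℝ}
    (hg : ∀ i ∈ s, ClassKInf (g i)) {μ : ι → ℝ} (hμ : ∀ i ∈ s, 0 < μ i) :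
    ∃ τ, ClassKInf τ ∧ ∀ v : ι → ℝ, (∀ i ∈ s, 0 ≤ v i) →
      τ (∑ i ∈ s, μ i * v i) ≤ ∑ i ∈ s, μ i * g i (v i) := by
  obtain ⟨τ, hτ, hτle⟩ := exists_sum_le fun i hi =>
    ((hg i hi).const_smul (hμ i hi)).comp_const_mul (inv_pos.2 (hμ i hi))
  refine ⟨τ, hτ, fun v hv => (hτle _ fun i hi => mul_nonneg (hμ i hi).le (hv i hi)).trans_eq ?_⟩
  exact Finset.sum_congr rfl fun i hi => by
    rw [inv_mul_cancel_left₀ (hμ i hi).ne', Pi.smul_apply, smul_eq_mul]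

end ClassKInf

/-- Membership in `K∞ ∪ {0}`, the class of the gains `ρ_ext` of external inputs. -/
def ClassKInfOrZero (g : ℝ → ℝ) : Prop :=
  ClassKInf g ∨ g = fun _ => 0

namespace ClassKInfOrZero

variable {g h : ℝ → ℝ}

lemma monotoneOn (hg : ClassKInfOrZero g) : MonotoneOn g (Set.Ici 0) := by
  rcases hg with hg | rfl
  exacts [hg.1.monotoneOn, monotoneOn_const]

lemma add (hg : ClassKInfOrZero g) (hh : ClassKInfOrZero h) : ClassKInfOrZero (g + h) := by
  rcases hg with hg | rfl
  · rcases hh with hh | rfl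
    exacts [Or.inl (hg.add hh), Or.inl ((add_zero g).symm ▸ hg)]
  · exact (zero_add h).symm ▸ hh

lemma const_smul (hg : ClassKInfOrZero g) {a : ℝ} (ha : 0 < a) : ClassKInfOrZero (a • g) := by
  rcases hg with hg | rfl
  exacts [Or.inl (hg.const_smul ha), Or.inr (smul_zero a)]

protected lemma sum {ι : Type*} {s : Finset ι} {g : ι → ℝ → ℝ}
    (hg : ∀ i ∈ s, ClassKInfOrZero (g i)) : ClassKInfOrZero (∑ i ∈ s, g i) :=
  Finset.sum_induction g _ (fun _ _ => add) (Or.inr rfl) hg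

end ClassKInfOrZero

/-! ### Stacked vectors and block-diagonal quadratic forms -/

lemma norm_sigma_uncurry_le_sum {ι : Type*} [Fintype ι] {b : ι → Type*} [∀ i, Fintype (b i)]
    {E : ∀ i, b i → Type*} [∀ i j, SeminormedAddCommGroup (E i j)] (y : ∀ i j, E i j) :
    ‖Sigma.uncurry y‖ ≤ ∑ i, ‖y i‖ := by
  refine (pi_norm_le_iff_of_nonneg (by positivity)).2 fun ⟨i, j⟩ => ?_
  exact (norm_le_pi_norm (y i) j).trans
    (Finset.single_le_sum (fun i _ => norm_nonneg (y i)) (Finset.mem_univ i))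

section BlockMatrices

variable {ι R : Type*} [Fintype ι] [DecidableEq ι] {a b : ι → Type*} [∀ i, Fintype (b i)]

lemma blockDiagonal'_mulVec_uncurry [NonUnitalNonAssocSemiring R]
    (A : ∀ i, Matrix (a i) (b i) R) (y : ∀ i, b i → R) :
    blockDiagonal' A *ᵥ Sigma.uncurry y = Sigma.uncurry fun i => A i *ᵥ y i := by
  funext ⟨i, j⟩
  simp only [mulVec, dotProduct, Fintype.sum_sigma]
  rw [Finset.sum_eq_single_of_mem i (Finset.mem_univ i) fun i' _ hne => ?_]
  · simp only [blockDiagonal'_apply_eq, Sigma.uncurry, mulVec, dotProduct]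
  · simp only [blockDiagonal'_apply_ne A _ _ hne.symm, zero_mul, Finset.sum_const_zero]

lemma uncurry_dotProduct_blockDiagonal'_mulVec [NonUnitalNonAssocSemiring R] [∀ i, Fintype (a i)]
    (A : ∀ i, Matrix (a i) (b i) R) (v : ∀ i, a i → R) (z : ∀ i, b i → R) :
    Sigma.uncurry v ⬝ᵥ blockDiagonal' A *ᵥ Sigma.uncurry z = ∑ i, v i ⬝ᵥ A i *ᵥ z i := by
  rw [blockDiagonal'_mulVec_uncurry, dotProduct, Fintype.sum_sigma]
  rfl

/-- The matrix `X(μ₁X₁,…,μ_NX_N)`: each of its four blocks is block diagonal, with the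
corresponding blocks of the matrices `μᵢXᵢ` on the diagonal. -/
def weightedBlocks [Mul R] [Zero R] (μ : ι → R) (X : ∀ i, Matrix (a i ⊕ b i) (a i ⊕ b i) R) :
    Matrix ((Σ i, a i) ⊕ (Σ i, b i)) ((Σ i, a i) ⊕ (Σ i, b i)) R :=
  fromBlocks (blockDiagonal' fun i => μ i • (X i).toBlocks₁₁)
    (blockDiagonal' fun i => μ i • (X i).toBlocks₁₂)
    (blockDiagonal' fun i => μ i • (X i).toBlocks₂₁)
    (blockDiagonal' fun i => μ i • (X i).toBlocks₂₂)

lemma sumElim_uncurry_dotProduct_weightedBlocks_mulVec [CommSemiring R] [∀ i, Fintype (a i)]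
    (μ : ι → R) (X : ∀ i, Matrix (a i ⊕ b i) (a i ⊕ b i) R) (v : ∀ i, a i → R)
    (z : ∀ i, b i → R) :
    Sum.elim (Sigma.uncurry v) (Sigma.uncurry z) ⬝ᵥ
        weightedBlocks μ X *ᵥ Sum.elim (Sigma.uncurry v) (Sigma.uncurry z) =
      ∑ i, μ i * (Sum.elim (v i) (z i) ⬝ᵥ X i *ᵥ Sum.elim (v i) (z i)) := by
  have hblocks i : Sum.elim (v i) (z i) ⬝ᵥ X i *ᵥ Sum.elim (v i) (z i) =
      v i ⬝ᵥ (X i).toBlocks₁₁ *ᵥ v i + v i ⬝ᵥ (X i).toBlocks₁₂ *ᵥ z i +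
        (z i ⬝ᵥ (X i).toBlocks₂₁ *ᵥ v i + z i ⬝ᵥ (X i).toBlocks₂₂ *ᵥ z i) := by
    conv_lhs => rw [← fromBlocks_toBlocks (X i)]
    simp only [fromBlocks_mulVec, sumElim_dotProduct_sumElim, Sum.elim_comp_inl,
      Sum.elim_comp_inr, dotProduct_add]
  simp only [weightedBlocks, fromBlocks_mulVec, sumElim_dotProduct_sumElim, Sum.elim_comp_inl,
    Sum.elim_comp_inr, dotProduct_add, uncurry_dotProduct_blockDiagonal'_mulVec, smul_mulVec,
    dotProduct_smul, smul_eq_mul, hblocks, mul_add, Finset.sum_add_distrib]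

end BlockMatrices

lemma dotProduct_transpose_mul_mul_mulVec {m n R : Type*} [Fintype m] [Fintype n]
    [CommSemiring R] (P : Matrix m n R) (Q : Matrix m m R) (z : n → R) :
    z ⬝ᵥ (Pᵀ * Q * P) *ᵥ z = (P *ᵥ z) ⬝ᵥ Q *ᵥ (P *ᵥ z) := by
  rw [← mulVec_mulVec, ← mulVec_mulVec, dotProduct_mulVec z, vecMul_transpose]

/-! ### Supply rates and coupling -/

/-- The supply rate of a storage function: the quadratic form of `X` at the mismatch
`[Ww - Ŵŵ; y - Hŷ]` of internal inputs `w`, `ŵ` and internal outputs `y`, `ŷ`. -/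
def supplyRate {p ph q qh t : Type*} [Fintype p] [Fintype ph] [Fintype q] [Fintype qh] [Fintype t]
    (W : Matrix t p ℝ) (Wh : Matrix t ph ℝ) (H : Matrix q qh ℝ) (X : Matrix (t ⊕ q) (t ⊕ q) ℝ)
    (w : p → ℝ) (wh : ph → ℝ) (y : q → ℝ) (yh : qh → ℝ) : ℝ :=
  Sum.elim (W *ᵥ w - Wh *ᵥ wh) (y - H *ᵥ yh) ⬝ᵥ X *ᵥ Sum.elim (W *ᵥ w - Wh *ᵥ wh) (y - H *ᵥ yh)

/-- The internal inputs `[w₁;…;w_N] = M[y₁;…;y_N]` that the coupling matrix `M` assigns to the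
internal outputs `yᵢ` of the subsystems. -/
def couple {ι : Type*} {p q : ι → Type*} [Fintype ι] [∀ i, Fintype (q i)]
    (M : Matrix (Σ i, p i) (Σ i, q i) ℝ) (y : ∀ i, q i → ℝ) : ∀ i, p i → ℝ :=
  Sigma.curry (M *ᵥ Sigma.uncurry y)

section CoupledSupply

variable {ι : Type*} [Fintype ι] [DecidableEq ι] {p ph q qh t : ι → Type*}
  [∀ i, Fintype (p i)] [∀ i, Fintype (ph i)] [∀ i, Fintype (q i)] [∀ i, Fintype (qh i)]
  {W : ∀ i, Matrix (t i) (p i) ℝ} {Wh : ∀ i, Matrix (t i) (ph i) ℝ}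
  {H : ∀ i, Matrix (q i) (qh i) ℝ}
  {M : Matrix (Σ i, p i) (Σ i, q i) ℝ} {Mh : Matrix (Σ i, ph i) (Σ i, qh i) ℝ}

lemma blockDiagonal'_mul_mulVec_outputMismatch
    (hcomm : blockDiagonal' W * M * blockDiagonal' H = blockDiagonal' Wh * Mh)
    (y : ∀ i, q i → ℝ) (yh : ∀ i, qh i → ℝ) :
    (blockDiagonal' W * M) *ᵥ Sigma.uncurry (fun i => y i - H i *ᵥ yh i) =
      Sigma.uncurry fun i => W i *ᵥ couple M y i - Wh i *ᵥ couple Mh yh i := by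
  calc (blockDiagonal' W * M) *ᵥ Sigma.uncurry (fun i => y i - H i *ᵥ yh i)
      = (blockDiagonal' W * M) *ᵥ (Sigma.uncurry y - blockDiagonal' H *ᵥ Sigma.uncurry yh) := by
        rw [blockDiagonal'_mulVec_uncurry]
        rfl
    _ = blockDiagonal' W *ᵥ Sigma.uncurry (couple M y) -
          blockDiagonal' Wh *ᵥ Sigma.uncurry (couple Mh yh) := by
        rw [mulVec_sub, mulVec_mulVec, hcomm, ← mulVec_mulVec, ← mulVec_mulVec]
        rfl
    _ = Sigma.uncurry fun i => W i *ᵥ couple M y i - Wh i *ᵥ couple Mh yh i := by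
        rw [blockDiagonal'_mulVec_uncurry, blockDiagonal'_mulVec_uncurry]
        rfl

lemma sum_supplyRate_couple_nonpos [∀ i, DecidableEq (q i)] [∀ i, Fintype (t i)]
    {X : ∀ i, Matrix (t i ⊕ q i) (t i ⊕ q i) ℝ} {μ : ι → ℝ}
    (hLMI : ∀ z : (Σ i, q i) → ℝ, z ⬝ᵥ
      ((fromRows (blockDiagonal' W * M) (1 : Matrix (Σ i, q i) (Σ i, q i) ℝ))ᵀ *
        weightedBlocks μ X * fromRows (blockDiagonal' W * M) 1) *ᵥ z ≤ 0)
    (hcomm : blockDiagonal' W * M * blockDiagonal' H = blockDiagonal' Wh * Mh)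
    (y : ∀ i, q i → ℝ) (yh : ∀ i, qh i → ℝ) :
    ∑ i, μ i * supplyRate (W i) (Wh i) (H i) (X i)
      (couple M y i) (couple Mh yh i) (y i) (yh i) ≤ 0 := by
  have hform := (dotProduct_transpose_mul_mul_mulVec _ _ _).symm.trans_le
    (hLMI (Sigma.uncurry fun i => y i - H i *ᵥ yh i))
  rwa [fromRows_mulVec, one_mulVec,
    blockDiagonal'_mul_mulVec_outputMismatch hcomm,
    sumElim_uncurry_dotProduct_weightedBlocks_mulVec] at hform

end CoupledSupply

/-! ### Control systems, storage functions and simulation functions -/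

/-- A discrete-time control system with set-valued transition map. The set of admissible inputs
is a subset of the input type `U`. -/
structure ControlSystem (X U Y : Type*) where
  inputs : Set U
  step : X → U → Set X
  output : X → Y

/-- A discrete-time control subsystem: external inputs and outputs as in a control system, and
internal ones through which it is connected to other subsystems. The sets of admissible inputs
are subsets of the types `U` and `W`. -/
structure ControlSubsystem (X U W Y₁ Y₂ : Type*) where
  extInputs : Set U
  intInputs : Set W
  step : X → U → W → Set X
  extOutput : X → Y₁
  intOutput : X → Y₂

/-- The function `V` is a simulation function from the abstraction `A` to the concrete system
`C`: it bounds the output error and, up to `ρ` and `ε`, decreases along matched transitions. -/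
structure IsSimulationFunction {X Xh U Uh Y : Type*} [TopologicalSpace X] [TopologicalSpace Xh]
    [Norm Uh] [SeminormedAddCommGroup Y] (A : ControlSystem Xh Uh Y) (C : ControlSystem X U Y)
    (V : X → Xh → ℝ) : Prop where
  continuous : Continuous fun pr : X × Xh => V pr.1 pr.2
  nonneg : ∀ x xh, 0 ≤ V x xh
  exists_output_le : ∃ α, ClassKInf α ∧ ∀ x xh, α ‖C.output x - A.output xh‖ ≤ V x xh
  exists_decrease : ∃ σ ρ ε, ClassKInf σ ∧ ClassKInfOrZero ρ ∧ 0 ≤ ε ∧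
    ∀ x xh, ∀ uh ∈ A.inputs, ∃ u ∈ C.inputs, ∀ xd ∈ C.step x u, ∃ xhd ∈ A.step xh uh,
      V xd xhd - V x xh ≤ -σ (V x xh) + ρ ‖uh‖ + ε

/-- The function `S` is a storage function from the abstraction `A` to the concrete subsystem `C`
with supply rate `s`; the quadratic rates of the paper are the functions `supplyRate W Ŵ H X`. -/
structure IsStorageFunction {X Xh U Uh W Wh Y₁ Y₂ Y₂h : Type*} [TopologicalSpace X]
    [TopologicalSpace Xh] [Norm Uh] [SeminormedAddCommGroup Y₁]
    (A : ControlSubsystem Xh Uh Wh Y₁ Y₂h) (C : ControlSubsystem X U W Y₁ Y₂)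
    (S : X → Xh → ℝ) (s : W → Wh → Y₂ → Y₂h → ℝ) : Prop where
  continuous : Continuous fun pr : X × Xh => S pr.1 pr.2
  nonneg : ∀ x xh, 0 ≤ S x xh
  exists_output_le : ∃ α, ClassKInf α ∧ ∀ x xh, α ‖C.extOutput x - A.extOutput xh‖ ≤ S x xh
  exists_dissipation : ∃ σ ρ ε, ClassKInf σ ∧ ClassKInfOrZero ρ ∧ 0 ≤ ε ∧
    ∀ x xh, ∀ uh ∈ A.extInputs, ∃ u ∈ C.extInputs, ∀ w ∈ C.intInputs, ∀ wh ∈ A.intInputs,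
      ∀ xd ∈ C.step x u w, ∃ xhd ∈ A.step xh uh wh,
        S xd xhd - S x xh ≤
          -σ (S x xh) + ρ ‖uh‖ + s w wh (C.intOutput x) (A.intOutput xh) + ε

section Interconnection

variable {ι : Type*} [Fintype ι] {X Xh U Uh : ι → Type*} {p ph r q qh : ι → Type*}
  [∀ i, Fintype (q i)] [∀ i, Fintype (qh i)]

/-- The condition `M ∏ᵢ Y₂ᵢ ⊆ ∏ᵢ Wᵢ`: the coupling only produces admissible internal inputs. -/
def IsAdmissibleCoupling {Y₁ : ι → Type*}
    (C : ∀ i, ControlSubsystem (X i) (U i) (p i → ℝ) (Y₁ i) (q i → ℝ))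
    (M : Matrix (Σ i, p i) (Σ i, q i) ℝ) : Prop :=
  ∀ (x : ∀ i, X i) (i : ι), couple M (fun j => (C j).intOutput (x j)) i ∈ (C i).intInputs

/-- The interconnection `I(Σ₁,…,Σ_N)` with coupling matrix `M`. -/
def interconnection (C : ∀ i, ControlSubsystem (X i) (U i) (p i → ℝ) (r i → ℝ) (q i → ℝ))
    (M : Matrix (Σ i, p i) (Σ i, q i) ℝ) :
    ControlSystem (∀ i, X i) (∀ i, U i) ((Σ i, r i) → ℝ) where
  inputs := {u | ∀ i, u i ∈ (C i).extInputs}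
  step x u := {xd | ∀ i,
    xd i ∈ (C i).step (x i) (u i) (couple M (fun j => (C j).intOutput (x j)) i)}
  output x := Sigma.uncurry fun i => (C i).extOutput (x i)

variable [∀ i, TopologicalSpace (X i)] [∀ i, TopologicalSpace (Xh i)]
  [∀ i, SeminormedAddCommGroup (Uh i)] [∀ i, Fintype (r i)]
  {A : ∀ i, ControlSubsystem (Xh i) (Uh i) (ph i → ℝ) (r i → ℝ) (qh i → ℝ)}
  {C : ∀ i, ControlSubsystem (X i) (U i) (p i → ℝ) (r i → ℝ) (q i → ℝ)}
  {S : ∀ i, X i → Xh i → ℝ} {s : ∀ i, (p i → ℝ) → (ph i → ℝ) → (q i → ℝ) → (qh i → ℝ) → ℝ}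
  {M : Matrix (Σ i, p i) (Σ i, q i) ℝ} {Mh : Matrix (Σ i, ph i) (Σ i, qh i) ℝ} {μ : ι → ℝ}

namespace IsStorageFunction

lemma exists_interconnection_output_le (hS : ∀ i, IsStorageFunction (A i) (C i) (S i) (s i))
    (hμ : ∀ i, 0 < μ i) :
    ∃ α, ClassKInf α ∧ ∀ x xh,
      α ‖(interconnection C M).output x - (interconnection A Mh).output xh‖ ≤
        ∑ i, μ i * S i (x i) (xh i) := by
  choose α hα hle using fun i => (hS i).exists_output_le
  obtain ⟨τ, hτ, hτle⟩ := ClassKInf.exists_sum_le (s := Finset.univ) fun i _ =>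
    (hα i).const_smul (hμ i)
  refine ⟨τ, hτ, fun x xh => ?_⟩
  let e i := (C i).extOutput (x i) - (A i).extOutput (xh i)
  calc τ ‖Sigma.uncurry e‖ ≤ τ (∑ i, ‖e i‖) :=
        hτ.1.monotoneOn (norm_nonneg _) (Finset.sum_nonneg fun i _ => norm_nonneg (e i))
          (norm_sigma_uncurry_le_sum e)
    _ ≤ ∑ i, μ i * α i ‖e i‖ := hτle _ fun i _ => norm_nonneg (e i)
    _ ≤ ∑ i, μ i * S i (x i) (xh i) := by
        gcongr with i
        exacts [(hμ i).le, hle i (x i) (xh i)]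

lemma exists_interconnection_decrease (hS : ∀ i, IsStorageFunction (A i) (C i) (S i) (s i))
    (hM : IsAdmissibleCoupling C M) (hMh : IsAdmissibleCoupling A Mh) (hμ : ∀ i, 0 < μ i)
    (hs : ∀ y yh, ∑ i, μ i * s i (couple M y i) (couple Mh yh i) (y i) (yh i) ≤ 0) :
    ∃ σ ρ ε, ClassKInf σ ∧ ClassKInfOrZero ρ ∧ 0 ≤ ε ∧
      ∀ x xh, ∀ uh ∈ (interconnection A Mh).inputs, ∃ u ∈ (interconnection C M).inputs,
        ∀ xd ∈ (interconnection C M).step x u, ∃ xhd ∈ (interconnection A Mh).step xh uh,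
          ∑ i, μ i * S i (xd i) (xhd i) - ∑ i, μ i * S i (x i) (xh i) ≤
            -σ (∑ i, μ i * S i (x i) (xh i)) + ρ ‖uh‖ + ε := by
  choose σ ρ ε hσ hρ hε hdiss using fun i => (hS i).exists_dissipation
  obtain ⟨τ, hτ, hτle⟩ := ClassKInf.exists_weighted_sum_le (s := Finset.univ)
    (fun i _ => hσ i) fun i _ => hμ i
  refine ⟨τ, ∑ i, μ i • ρ i, ∑ i, μ i * ε i, hτ, .sum fun i _ => (hρ i).const_smul (hμ i),
    Finset.sum_nonneg fun i _ => mul_nonneg (hμ i).le (hε i), fun x xh uh huh => ?_⟩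
  choose u hu hstep using fun i => hdiss i (x i) (xh i) (uh i) (huh i)
  refine ⟨u, hu, fun xd hxd => ?_⟩
  choose xhd hxhd hle using fun i => hstep i _ (hM x i) _ (hMh xh i) (xd i) (hxd i)
  refine ⟨xhd, hxhd, ?_⟩
  have hsum := Finset.sum_le_sum fun i (_ : i ∈ Finset.univ) =>
    mul_le_mul_of_nonneg_left (hle i) (hμ i).le
  simp only [mul_add, mul_sub, mul_neg, Finset.sum_add_distrib, Finset.sum_sub_distrib,
    Finset.sum_neg_distrib] at hsum
  have hσsum := hτle (fun i => S i (x i) (xh i)) fun i _ => (hS i).nonneg _ _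
  have hρsum : ∑ i, μ i * ρ i ‖uh i‖ ≤ (∑ i, μ i • ρ i) ‖uh‖ := by
    simp only [Finset.sum_apply, Pi.smul_apply, smul_eq_mul]
    gcongr with i
    exacts [(hμ i).le,
      (hρ i).monotoneOn (norm_nonneg _) (norm_nonneg _) (norm_le_pi_norm uh i)]
  have hsupply := hs (fun i => (C i).intOutput (x i)) fun i => (A i).intOutput (xh i)
  linarith

theorem isSimulationFunction_interconnection
    (hS : ∀ i, IsStorageFunction (A i) (C i) (S i) (s i))
    (hM : IsAdmissibleCoupling C M) (hMh : IsAdmissibleCoupling A Mh) (hμ : ∀ i, 0 < μ i)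
    (hs : ∀ y yh, ∑ i, μ i * s i (couple M y i) (couple Mh yh i) (y i) (yh i) ≤ 0) :
    IsSimulationFunction (interconnection A Mh) (interconnection C M)
      fun x xh => ∑ i, μ i * S i (x i) (xh i) where
  continuous := continuous_finsetSum _ fun i _ => continuous_const.mul <|
    (hS i).continuous.comp <|
      ((continuous_apply i).comp continuous_fst).prodMk ((continuous_apply i).comp continuous_snd)
  nonneg _ _ := Finset.sum_nonneg fun i _ => mul_nonneg (hμ i).le ((hS i).nonneg _ _)
  exists_output_le := exists_interconnection_output_le hS hμ
  exists_decrease := exists_interconnection_decrease hS hM hMh hμ hs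

end IsStorageFunction

theorem stmt_5_general [DecidableEq ι] [∀ i, DecidableEq (q i)] {t : ι → Type*}
    [∀ i, Fintype (p i)] [∀ i, Fintype (ph i)] [∀ i, Fintype (t i)]
    {W : ∀ i, Matrix (t i) (p i) ℝ} {Wh : ∀ i, Matrix (t i) (ph i) ℝ}
    {H : ∀ i, Matrix (q i) (qh i) ℝ} {Q : ∀ i, Matrix (t i ⊕ q i) (t i ⊕ q i) ℝ}
    (hS : ∀ i, IsStorageFunction (A i) (C i) (S i) (supplyRate (W i) (Wh i) (H i) (Q i)))
    (hM : IsAdmissibleCoupling C M) (hMh : IsAdmissibleCoupling A Mh) (hμ : ∀ i, 0 < μ i)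
    (hLMI : ∀ z : (Σ i, q i) → ℝ, z ⬝ᵥ
      ((fromRows (blockDiagonal' W * M) (1 : Matrix (Σ i, q i) (Σ i, q i) ℝ))ᵀ *
        weightedBlocks μ Q * fromRows (blockDiagonal' W * M) 1) *ᵥ z ≤ 0)
    (hcomm : blockDiagonal' W * M * blockDiagonal' H = blockDiagonal' Wh * Mh) :
    IsSimulationFunction (interconnection A Mh) (interconnection C M)
      fun x xh => ∑ i, μ i * S i (x i) (xh i) :=
  IsStorageFunction.isSimulationFunction_interconnection hS hM hMh hμ
    (sum_supplyRate_couple_nonpos hLMI hcomm)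

end Interconnection

/-- Compositionality theorem (Theorem 2 in the paper): if each subsystem `Σᵢ` admits an
abstraction `Σ̂ᵢ` with storage function `Sᵢ`, and the matrix conditions
`[WM; I_q]ᵀ X(μ₁X₁,…,μ_NX_N) [WM; I_q] ⪯ 0` and `WMH = ŴM̂` hold for some `μᵢ > 0`,
then `V(x,x̂) := ∑ᵢ μᵢ Sᵢ(xᵢ,x̂ᵢ)` is a simulation function from the interconnected
abstraction `Σ̂ = I(Σ̂₁,…,Σ̂_N)` (coupled by `M̂`) to `Σ = I(Σ₁,…,Σ_N)` (coupled by `M`). -/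
theorem stmt_5
    (N : ℕ) (hN : 1 ≤ N)
    -- state spaces of the subsystems and their abstractions
    {X Xh : Fin N → Type} [∀ i, TopologicalSpace (X i)] [∀ i, TopologicalSpace (Xh i)]
    -- concrete external input spaces
    {U : Fin N → Type}
    -- dimensions: abstract external inputs, internal inputs (concrete/abstract),
    -- external outputs, internal outputs (concrete/abstract), and ranges of `Wᵢ, Ŵᵢ`
    (m p ph r q qh t : Fin N → ℕ)
    -- abstract external input sets and internal input sets
    (Uh : ∀ i, Set (Fin (m i) → ℝ))
    (Wset : ∀ i, Set (Fin (p i) → ℝ)) (Whset : ∀ i, Set (Fin (ph i) → ℝ))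
    -- transition maps
    (f : ∀ i, X i → U i → (Fin (p i) → ℝ) → Set (X i))
    (fh : ∀ i, Xh i → (Fin (m i) → ℝ) → (Fin (ph i) → ℝ) → Set (Xh i))
    -- external and internal output maps (note `Ŷ₁ᵢ ⊆ Y₁ᵢ`)
    (h1 : ∀ i, X i → Fin (r i) → ℝ) (h1h : ∀ i, Xh i → Fin (r i) → ℝ)
    (h2 : ∀ i, X i → Fin (q i) → ℝ) (h2h : ∀ i, Xh i → Fin (qh i) → ℝ)
    -- storage functions and their data
    (S : ∀ i, X i → Xh i → ℝ)
    (hScont : ∀ i, Continuous fun pr : X i × Xh i => S i pr.1 pr.2)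
    (hSnonneg : ∀ i x xh, 0 ≤ S i x xh)
    (α σ ρ : Fin N → ℝ → ℝ) (ε : Fin N → ℝ)
    (hα : ∀ i, ClassKInf (α i)) (hσ : ∀ i, ClassKInf (σ i))
    (hρ : ∀ i, ClassKInf (ρ i) ∨ ρ i = fun _ => 0) (hε : ∀ i, 0 ≤ ε i)
    (Wm : ∀ i, Matrix (Fin (t i)) (Fin (p i)) ℝ)
    (Whm : ∀ i, Matrix (Fin (t i)) (Fin (ph i)) ℝ)
    (Hm : ∀ i, Matrix (Fin (q i)) (Fin (qh i)) ℝ)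
    (X11 : ∀ i, Matrix (Fin (t i)) (Fin (t i)) ℝ)
    (X12 : ∀ i, Matrix (Fin (t i)) (Fin (q i)) ℝ)
    (X21 : ∀ i, Matrix (Fin (q i)) (Fin (t i)) ℝ)
    (X22 : ∀ i, Matrix (Fin (q i)) (Fin (q i)) ℝ)
    -- each `Xᵢ` is symmetric
    (hXsymm : ∀ i, (X11 i)ᵀ = X11 i ∧ (X22 i)ᵀ = X22 i ∧ (X12 i)ᵀ = X21 i)
    -- storage function condition (i)
    (hS1 : ∀ i, ∀ (x : X i) (xh : Xh i), α i ‖h1 i x - h1h i xh‖ ≤ S i x xh)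
    -- storage function condition (ii)
    (hS2 : ∀ i, ∀ (x : X i) (xh : Xh i), ∀ uh ∈ Uh i, ∃ u : U i,
      ∀ w ∈ Wset i, ∀ wh ∈ Whset i, ∀ xd ∈ f i x u w, ∃ xhd ∈ fh i xh uh wh,
        S i xd xhd - S i x xh ≤ -σ i (S i x xh) + ρ i ‖uh‖ +
          (Sum.elim (Wm i *ᵥ w - Whm i *ᵥ wh) (h2 i x - Hm i *ᵥ h2h i xh)) ⬝ᵥ
            (fromBlocks (X11 i) (X12 i) (X21 i) (X22 i) *ᵥ
              Sum.elim (Wm i *ᵥ w - Whm i *ᵥ wh) (h2 i x - Hm i *ᵥ h2h i xh)) + ε i)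
    -- coupling matrices of the concrete and abstract interconnections
    (Mc : Matrix (Σ i, Fin (p i)) (Σ i, Fin (q i)) ℝ)
    (Mh : Matrix (Σ i, Fin (ph i)) (Σ i, Fin (qh i)) ℝ)
    -- well-posedness of the interconnections: `M ∏ Y₂ᵢ ⊆ ∏ Wᵢ` and `M̂ ∏ Ŷ₂ᵢ ⊆ ∏ Ŵᵢ`
    (hMwell : ∀ x : ∀ i, X i, ∀ i,
      (fun j => (Mc *ᵥ fun k : Σ i, Fin (q i) => h2 k.1 (x k.1) k.2) ⟨i, j⟩) ∈ Wset i)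
    (hMhwell : ∀ xh : ∀ i, Xh i, ∀ i,
      (fun j => (Mh *ᵥ fun k : Σ i, Fin (qh i) => h2h k.1 (xh k.1) k.2) ⟨i, j⟩) ∈ Whset i)
    -- the coefficients μᵢ
    (μ : Fin N → ℝ) (hμ : ∀ i, 0 < μ i)
    -- condition (i): `[WM; I_q]ᵀ X(μ₁X₁,…,μ_NX_N) [WM; I_q] ⪯ 0`
    (hLMI : ∀ z : (Σ i, Fin (q i)) → ℝ,
      z ⬝ᵥ (((fromRows (blockDiagonal' Wm * Mc) (1 : Matrix (Σ i, Fin (q i)) (Σ i, Fin (q i)) ℝ))ᵀ *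
          fromBlocks (blockDiagonal' fun i => μ i • X11 i) (blockDiagonal' fun i => μ i • X12 i)
            (blockDiagonal' fun i => μ i • X21 i) (blockDiagonal' fun i => μ i • X22 i) *
          fromRows (blockDiagonal' Wm * Mc) 1) *ᵥ z) ≤ 0)
    -- condition (ii): `WMH = ŴM̂`
    (hEq : blockDiagonal' Wm * Mc * blockDiagonal' Hm = blockDiagonal' Whm * Mh)
    -- the candidate simulation function
    (V : (∀ i, X i) → (∀ i, Xh i) → ℝ)
    (hV : ∀ x xh, V x xh = ∑ i, μ i * S i (x i) (xh i)) :
    -- `V` is a simulation function from `Σ̂ = I(Σ̂₁,…,Σ̂_N)` to `Σ = I(Σ₁,…,Σ_N)`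
    (Continuous fun pr : (∀ i, X i) × (∀ i, Xh i) => V pr.1 pr.2) ∧
    ∃ αc σc ρc : ℝ → ℝ, ∃ εc : ℝ,
      ClassKInf αc ∧ ClassKInf σc ∧ (ClassKInf ρc ∨ ρc = fun _ => 0) ∧ 0 ≤ εc ∧
      (∀ (x : ∀ i, X i) (xh : ∀ i, Xh i),
        αc ‖(fun k : Σ i, Fin (r i) => h1 k.1 (x k.1) k.2) -
            (fun k : Σ i, Fin (r i) => h1h k.1 (xh k.1) k.2)‖ ≤ V x xh) ∧
      (∀ (x : ∀ i, X i) (xh : ∀ i, Xh i) (uh : ∀ i, Fin (m i) → ℝ),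
        (∀ i, uh i ∈ Uh i) → ∃ u : ∀ i, U i,
          ∀ xd : ∀ i, X i,
            (∀ i, xd i ∈ f i (x i) (u i)
              fun j => (Mc *ᵥ fun k : Σ i, Fin (q i) => h2 k.1 (x k.1) k.2) ⟨i, j⟩) →
            ∃ xhd : ∀ i, Xh i,
              (∀ i, xhd i ∈ fh i (xh i) (uh i)
                fun j => (Mh *ᵥ fun k : Σ i, Fin (qh i) => h2h k.1 (xh k.1) k.2) ⟨i, j⟩) ∧
              V xd xhd - V x xh ≤ -σc (V x xh) + ρc ‖uh‖ + εc) := by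
  obtain rfl : V = fun x xh => ∑ i, μ i * S i (x i) (xh i) := funext₂ hV
  let C i : ControlSubsystem (X i) (U i) (Fin (p i) → ℝ) (Fin (r i) → ℝ) (Fin (q i) → ℝ) :=
    ⟨Set.univ, Wset i, f i, h1 i, h2 i⟩
  let A i : ControlSubsystem (Xh i) (Fin (m i) → ℝ) (Fin (ph i) → ℝ) (Fin (r i) → ℝ)
      (Fin (qh i) → ℝ) := ⟨Uh i, Whset i, fh i, h1h i, h2h i⟩
  let Q i := fromBlocks (X11 i) (X12 i) (X21 i) (X22 i)
  have hstorage i : IsStorageFunction (A i) (C i) (S i) (supplyRate (Wm i) (Whm i) (Hm i) (Q i)) :=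
    ⟨hScont i, hSnonneg i, ⟨α i, hα i, hS1 i⟩, σ i, ρ i, ε i, hσ i, hρ i, hε i,
      fun x xh uh huh => (hS2 i x xh uh huh).imp fun _ hu => ⟨trivial, hu⟩⟩
  obtain ⟨hcont, -, ⟨αc, hαc, hout⟩, σc, ρc, εc, hσc, hρc, hεc, hdec⟩ :=
    stmt_5_general hstorage hMwell hMhwell hμ hLMI hEq
  exact ⟨hcont, αc, σc, ρc, εc, hαc, hσc, hρc, hεc, hout,
    fun x xh uh huh => (hdec x xh uh huh).imp fun _ hu => hu.2⟩
end

section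
/- Let N ≥ 1, let α_1,…,α_N be class-K∞ functions and μ_1,…,μ_N > 0. Define ᾱ(s) := max{ Σ_{i=1}^N α_i⁻¹(s_i) : s_1,…,s_N ≥ 0, Σ_{i=1}^N μ_i s_i = s } for s ≥ 0. Then the maximum is attained for every s ≥ 0 and ᾱ is a class-K∞ function; in particular, for all s_1,…,s_N ≥ 0 one has Σ_{i=1}^N α_i⁻¹(s_i) ≤ ᾱ(Σ_{i=1}^N μ_i s_i). -/
open Filter

/-!
Write `βᵢ = αᵢ⁻¹`, which is again class-K∞. The constraint set `{x ≥ 0 : ∑ μᵢ xᵢ = s}` is a compact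
simplex and `x ↦ ∑ βᵢ(xᵢ)` is continuous on the nonnegative orthant, so the maximum is attained.
This objective is also strictly increasing there, and raising one coordinate of a maximiser at level
`s` reaches any level `s' > s`, hence strict monotonicity of `ᾱ`. By homogeneity the simplex at
level `s` is `s` times the one at level `1`, so `ᾱ(s)` is the maximum over `t` in a fixed compact
set of `∑ βᵢ(s tᵢ)`, which is jointly continuous in `(s, t)`; hence `ᾱ` is continuous. Spending the
whole level on one coordinate gives `βᵢ(s / μᵢ) ≤ ᾱ(s)`, hence unboundedness.
-/

section General

open Set

lemma continuousOn_of_monotoneOn_of_image_eq {X Y : Type*}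
    [LinearOrder X] [TopologicalSpace X] [OrderTopology X]
    [LinearOrder Y] [TopologicalSpace Y] [OrderTopology Y] [DenselyOrdered Y]
    {f : X → Y} {s : Set X} {t : Set Y} [s.OrdConnected] [t.OrdConnected]
    (hf : MonotoneOn f s) (hst : f '' s = t) : ContinuousOn f s := by
  have hmaps : MapsTo f s t := mapsTo_iff_image_subset.2 hst.subset
  have hmono : Monotone (hmaps.restrict f s t) := fun x y hxy => hf x.2 y.2 hxy
  have hsurj : Function.Surjective (hmaps.restrict f s t) :=
    hmaps.restrict_surjective_iff.2 hst.superset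
  exact continuousOn_iff_continuous_domRestrict.2
    (continuous_subtype_val.comp (hmono.continuous_of_surjective hsurj))

lemma strictMonoOn_sum_apply {ι M : Type*} [Fintype ι] {X : ι → Type*} [∀ i, PartialOrder (X i)]
    [AddCommMonoid M] [PartialOrder M] [IsOrderedCancelAddMonoid M] {f : ∀ i, X i → M}
    {s : ∀ i, Set (X i)} (hf : ∀ i, StrictMonoOn (f i) (s i)) :
    StrictMonoOn (fun x : ∀ i, X i => ∑ i, f i (x i)) (univ.pi s) := by
  intro x hx y hy hxy
  obtain ⟨hle, i, hi⟩ := Pi.lt_def.1 hxy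
  exact Finset.sum_lt_sum
    (fun j _ => (hf j).monotoneOn (hx j trivial) (hy j trivial) (hle j))
    ⟨i, Finset.mem_univ i, hf i (hx i trivial) (hy i trivial) hi⟩

lemma continuousOn_sum_apply {ι M : Type*} [Fintype ι] {X : ι → Type*}
    [∀ i, TopologicalSpace (X i)] [AddCommMonoid M] [TopologicalSpace M] [ContinuousAdd M]
    {f : ∀ i, X i → M} {s : ∀ i, Set (X i)} (hf : ∀ i, ContinuousOn (f i) (s i)) :
    ContinuousOn (fun x : ∀ i, X i => ∑ i, f i (x i)) (univ.pi s) :=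
  continuousOn_finsetSum _ fun i _ =>
    (hf i).comp (continuous_apply i).continuousOn fun _ hx => hx i trivial

lemma continuousOn_sSup_image_of_isCompact {X Y Z : Type*} [TopologicalSpace X]
    [TopologicalSpace Y] [ConditionallyCompleteLinearOrder Z] [TopologicalSpace Z]
    [OrderTopology Z] {f : X → Y → Z} {s : Set X} {K : Set Y} (hK : IsCompact K)
    (hf : ContinuousOn (Function.uncurry f) (s ×ˢ K)) :
    ContinuousOn (fun x => sSup (f x '' K)) s := by
  have : CompactSpace K := isCompact_iff_compactSpace.1 hK
  let g : s → K → Z := fun x y => f x y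
  have hg : Continuous (Function.uncurry g) :=
    hf.comp_continuous (by fun_prop : Continuous fun p : s × K => ((p.1 : X), (p.2 : Y)))
      fun p => ⟨p.1.2, p.2.2⟩
  have himage : ∀ x : s, g x '' univ = f x '' K := fun x => by
    rw [image_univ, image_eq_range]
  have hsup : Continuous fun x : s => sSup (g x '' univ) := isCompact_univ.continuous_sSup hg
  simp only [himage] at hsup
  exact continuousOn_iff_continuous_domRestrict.2 hsup

end General

section ClassK

open Set

lemma ClassK.continuousOn {f : ℝ → ℝ} (hf : ClassK f) : ContinuousOn f (Ici 0) := hf.1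

lemma ClassK.strictMonoOn {f : ℝ → ℝ} (hf : ClassK f) : StrictMonoOn f (Ici 0) := hf.2.1

lemma ClassK.map_zero {f : ℝ → ℝ} (hf : ClassK f) : f 0 = 0 := hf.2.2

lemma ClassK.mapsTo_Ici {f : ℝ → ℝ} (hf : ClassK f) : MapsTo f (Ici 0) (Ici 0) := fun x hx => by
  simpa only [mem_Ici, hf.map_zero] using hf.strictMonoOn.monotoneOn self_mem_Ici hx hx

lemma classKInf_of_strictMonoOn_of_image_eq {f : ℝ → ℝ} (hf : StrictMonoOn f (Ici 0))
    (himage : f '' Ici 0 = Ici 0) : ClassKInf f := by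
  have hzero : f 0 = 0 :=
    (hf.monotoneOn.map_isLeast isLeast_Ici).unique (by rw [himage]; exact isLeast_Ici)
  refine ⟨⟨continuousOn_of_monotoneOn_of_image_eq hf.monotoneOn himage, hf, hzero⟩, ?_⟩
  refine tendsto_atTop.2 fun M => ?_
  obtain ⟨x, hx, hfx⟩ : max M 0 ∈ f '' Ici 0 := himage.superset (le_max_right M 0)
  filter_upwards [eventually_ge_atTop x] with y hxy
  calc M ≤ max M 0 := le_max_left M 0
    _ = f x := hfx.symm
    _ ≤ f y := hf.monotoneOn hx (hx.trans hxy) hxy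

lemma classKInf_of_invOn {f g : ℝ → ℝ} (hf : StrictMonoOn f (Ici 0))
    (hfmaps : MapsTo f (Ici 0) (Ici 0)) (hgmaps : MapsTo g (Ici 0) (Ici 0))
    (hinv : InvOn g f (Ici 0) (Ici 0)) : ClassKInf g := by
  have hgmono : MonotoneOn g (Ici 0) :=
    Function.monotoneOn_of_rightInvOn_of_mapsTo hf.monotoneOn hinv.2 hgmaps
  exact classKInf_of_strictMonoOn_of_image_eq (hgmono.strictMonoOn_of_injOn hinv.2.injOn)
    (hinv.symm.bijOn hgmaps hfmaps).image_eq

end ClassK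

section WeightedSimplex

open Set
open scoped Pointwise

variable {ι : Type*} [Fintype ι] {μ : ι → ℝ} {s : ℝ} {x : ι → ℝ}

/-- The simplex `{x ≥ 0 : ∑ μᵢ xᵢ = s}` with weights `μ` at level `s`: the constraint set of the
maximisation problem defining `ᾱ(s)`. -/
def weightedSimplex (μ : ι → ℝ) (s : ℝ) : Set (ι → ℝ) :=
  {x | 0 ≤ x ∧ ∑ i, μ i * x i = s}

lemma isCompact_weightedSimplex (hμ : ∀ i, 0 < μ i) (s : ℝ) :
    IsCompact (weightedSimplex μ s) := by
  have hclosed : IsClosed (weightedSimplex μ s) :=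
    isClosed_Ici.inter (isClosed_eq (by fun_prop) continuous_const)
  refine (isCompact_Icc (a := 0) (b := fun i => s / μ i)).of_isClosed_subset hclosed ?_
  rintro x ⟨hx, rfl⟩
  refine ⟨hx, fun i => (le_div_iff₀' (hμ i)).2 ?_⟩
  exact Finset.single_le_sum (f := fun i => μ i * x i)
    (fun j _ => mul_nonneg (hμ j).le (hx j)) (Finset.mem_univ i)

lemma weightedSimplex_zero (hμ : ∀ i, 0 < μ i) : weightedSimplex μ 0 = {0} := by
  refine Subset.antisymm (fun x ⟨hx, hsum⟩ => ?_) (by simp [weightedSimplex])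
  have hterm : ∀ i ∈ Finset.univ, μ i * x i = 0 :=
    (Finset.sum_eq_zero_iff_of_nonneg fun i _ => mul_nonneg (hμ i).le (hx i)).1 hsum
  exact funext fun i =>
    (mul_eq_zero.1 (hterm i (Finset.mem_univ i))).resolve_left (hμ i).ne'

lemma add_single_mem_weightedSimplex [DecidableEq ι] {i : ι} (hμ : 0 < μ i)
    (hx : x ∈ weightedSimplex μ s) {c : ℝ} (hc : 0 ≤ c) :
    x + Pi.single i (c / μ i) ∈ weightedSimplex μ (s + c) := by
  refine ⟨add_nonneg hx.1 (Pi.single_nonneg.2 (div_nonneg hc hμ.le)), ?_⟩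
  simp [mul_add, Finset.sum_add_distrib, hx.2, Pi.single_apply, mul_div_cancel₀ _ hμ.ne']

lemma single_mem_weightedSimplex [DecidableEq ι] {i : ι} (hμ : 0 < μ i) (hs : 0 ≤ s) :
    Pi.single i (s / μ i) ∈ weightedSimplex μ s := by
  have hzero : (0 : ι → ℝ) ∈ weightedSimplex μ 0 := by simp [weightedSimplex]
  simpa only [zero_add] using add_single_mem_weightedSimplex hμ hzero hs

lemma weightedSimplex_nonempty [Nonempty ι] (hμ : ∀ i, 0 < μ i) (hs : 0 ≤ s) :
    (weightedSimplex μ s).Nonempty := by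
  classical
  obtain ⟨i⟩ := ‹Nonempty ι›
  exact ⟨_, single_mem_weightedSimplex (hμ i) hs⟩

lemma smul_mem_weightedSimplex (hx : x ∈ weightedSimplex μ s) {c : ℝ} (hc : 0 ≤ c) :
    c • x ∈ weightedSimplex μ (c * s) := by
  refine ⟨smul_nonneg hc hx.1, ?_⟩
  simp only [Pi.smul_apply, smul_eq_mul, mul_left_comm _ c, ← Finset.mul_sum, hx.2]

lemma weightedSimplex_eq_smul [Nonempty ι] (hμ : ∀ i, 0 < μ i) (hs : 0 ≤ s) :
    weightedSimplex μ s = s • weightedSimplex μ 1 := by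
  refine Subset.antisymm (fun x hx => ?_) ?_
  · rcases hs.eq_or_lt with rfl | hs
    · rw [weightedSimplex_zero hμ] at hx
      rwa [zero_smul_set (weightedSimplex_nonempty hμ zero_le_one)]
    · rw [mem_smul_set_iff_inv_smul_mem₀ hs.ne']
      simpa only [inv_mul_cancel₀ hs.ne'] using
        smul_mem_weightedSimplex hx (inv_nonneg.2 hs.le)
  · rintro _ ⟨t, ht, rfl⟩
    simpa only [mul_one] using smul_mem_weightedSimplex ht hs

end WeightedSimplex

section MaxSum

open Set

variable {ι : Type*} [Fintype ι] {β : ι → ℝ → ℝ} {μ : ι → ℝ} {s : ℝ}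

/-- The values `∑ βᵢ(xᵢ)` over the simplex of weights `μ` at level `s`; the functions `βᵢ` play the
role of the inverses `αᵢ⁻¹`. -/
def sumValues (β : ι → ℝ → ℝ) (μ : ι → ℝ) (s : ℝ) : Set ℝ :=
  (fun x : ι → ℝ => ∑ i, β i (x i)) '' weightedSimplex μ s

/-- The function `ᾱ` of the theorem, as a supremum; `isGreatest_maxSum` shows that it is a
maximum. -/
noncomputable def maxSum (β : ι → ℝ → ℝ) (μ : ι → ℝ) (s : ℝ) : ℝ :=
  sSup (sumValues β μ s)

lemma isGreatest_maxSum [Nonempty ι] (hβ : ∀ i, ContinuousOn (β i) (Ici 0))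
    (hμ : ∀ i, 0 < μ i) (hs : 0 ≤ s) : IsGreatest (sumValues β μ s) (maxSum β μ s) := by
  have hcont : ContinuousOn (fun x : ι → ℝ => ∑ i, β i (x i)) (weightedSimplex μ s) :=
    (continuousOn_sum_apply hβ).mono fun x hx i _ => hx.1 i
  exact ((isCompact_weightedSimplex hμ s).image_of_continuousOn hcont).isGreatest_sSup
    ((weightedSimplex_nonempty hμ hs).image _)

lemma sum_le_maxSum [Nonempty ι] (hβ : ∀ i, ContinuousOn (β i) (Ici 0)) (hμ : ∀ i, 0 < μ i)
    {x : ι → ℝ} (hx : 0 ≤ x) : ∑ i, β i (x i) ≤ maxSum β μ (∑ i, μ i * x i) :=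
  (isGreatest_maxSum hβ hμ (Finset.sum_nonneg fun i _ => mul_nonneg (hμ i).le (hx i))).2
    ⟨x, ⟨hx, rfl⟩, rfl⟩

lemma maxSum_zero (hμ : ∀ i, 0 < μ i) : maxSum β μ 0 = ∑ i, β i 0 := by
  simp [maxSum, sumValues, weightedSimplex_zero hμ]

lemma continuousOn_maxSum [Nonempty ι] (hβ : ∀ i, ContinuousOn (β i) (Ici 0))
    (hμ : ∀ i, 0 < μ i) : ContinuousOn (maxSum β μ) (Ici 0) := by
  have hjoint : ContinuousOn (Function.uncurry fun (s : ℝ) (t : ι → ℝ) => ∑ i, β i ((s • t) i))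
      (Ici 0 ×ˢ weightedSimplex μ 1) :=
    (continuousOn_sum_apply hβ).comp continuous_smul.continuousOn
      fun p hp i _ => mul_nonneg hp.1 (hp.2.1 i)
  refine (continuousOn_sSup_image_of_isCompact (isCompact_weightedSimplex hμ 1) hjoint).congr
    fun s hs => ?_
  rw [maxSum, sumValues, weightedSimplex_eq_smul hμ hs, ← image_smul, image_image]

lemma strictMonoOn_maxSum [Nonempty ι] (hcont : ∀ i, ContinuousOn (β i) (Ici 0))
    (hmono : ∀ i, StrictMonoOn (β i) (Ici 0)) (hμ : ∀ i, 0 < μ i) :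
    StrictMonoOn (maxSum β μ) (Ici 0) := by
  classical
  intro s hs s' hs' hlt
  obtain ⟨i⟩ := ‹Nonempty ι›
  obtain ⟨x, hx, hmax⟩ := (isGreatest_maxSum hcont hμ hs).1
  set y : ι → ℝ := x + Pi.single i ((s' - s) / μ i)
  have hy : y ∈ weightedSimplex μ s' := by
    simpa only [add_sub_cancel] using
      add_single_mem_weightedSimplex (hμ i) hx (sub_nonneg.2 hlt.le)
  have hxy : x < y := lt_add_of_pos_right x (Pi.single_pos.2 (div_pos (sub_pos.2 hlt) (hμ i)))
  calc maxSum β μ s = ∑ j, β j (x j) := hmax.symm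
    _ < ∑ j, β j (y j) :=
      strictMonoOn_sum_apply hmono (fun j _ => hx.1 j) (fun j _ => hy.1 j) hxy
    _ ≤ maxSum β μ s' := (isGreatest_maxSum hcont hμ hs').2 ⟨y, hy, rfl⟩

lemma apply_div_le_maxSum (hcont : ∀ i, ContinuousOn (β i) (Ici 0)) (hzero : ∀ i, β i 0 = 0)
    (hμ : ∀ i, 0 < μ i) (hs : 0 ≤ s) (i : ι) : β i (s / μ i) ≤ maxSum β μ s := by
  classical
  have : Nonempty ι := ⟨i⟩
  refine (isGreatest_maxSum hcont hμ hs).2 ⟨_, single_mem_weightedSimplex (hμ i) hs, ?_⟩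
  refine (Fintype.sum_eq_single i fun j hji => ?_).trans (by rw [Pi.single_eq_same])
  rw [Pi.single_eq_of_ne hji, hzero]

lemma classK_maxSum [Nonempty ι] (hβ : ∀ i, ClassK (β i)) (hμ : ∀ i, 0 < μ i) :
    ClassK (maxSum β μ) :=
  ⟨continuousOn_maxSum (fun i => (hβ i).continuousOn) hμ,
    strictMonoOn_maxSum (fun i => (hβ i).continuousOn) (fun i => (hβ i).strictMonoOn) hμ,
    by simp [maxSum_zero hμ, fun i => (hβ i).map_zero]⟩

lemma tendsto_maxSum_atTop (hcont : ∀ i, ContinuousOn (β i) (Ici 0)) (hzero : ∀ i, β i 0 = 0)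
    (hμ : ∀ i, 0 < μ i) {i : ι} (hi : Tendsto (β i) atTop atTop) :
    Tendsto (maxSum β μ) atTop atTop := by
  refine tendsto_atTop_mono' atTop ?_ (hi.comp (tendsto_id.atTop_div_const (hμ i)))
  filter_upwards [eventually_ge_atTop 0] with s hs using
    apply_div_le_maxSum hcont hzero hμ hs i

theorem stmt_6_general (hβ : ∀ i, ClassK (β i)) (hβ_top : ∃ i, Tendsto (β i) atTop atTop)
    (hμ : ∀ i, 0 < μ i) :
    (∀ s ≥ (0 : ℝ), IsGreatest (sumValues β μ s) (maxSum β μ s)) ∧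
    ClassKInf (maxSum β μ) ∧
    (∀ x : ι → ℝ, 0 ≤ x → ∑ i, β i (x i) ≤ maxSum β μ (∑ i, μ i * x i)) := by
  obtain ⟨i, hi⟩ := hβ_top
  have : Nonempty ι := ⟨i⟩
  have hcont : ∀ i, ContinuousOn (β i) (Ici 0) := fun i => (hβ i).continuousOn
  exact ⟨fun s hs => isGreatest_maxSum hcont hμ hs,
    ⟨classK_maxSum hβ hμ, tendsto_maxSum_atTop hcont (fun i => (hβ i).map_zero) hμ hi⟩,
    fun x hx => sum_le_maxSum hcont hμ hx⟩

end MaxSum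

/-- Let `α₁,…,α_N` be class-K∞ and `μᵢ > 0`, and define
`ᾱ(s) = max { ∑ αᵢ⁻¹(sᵢ) : sᵢ ≥ 0, ∑ μᵢ sᵢ = s }`. Then the maximum is attained for every
`s ≥ 0`, `ᾱ` is class-K∞, and `∑ αᵢ⁻¹(sᵢ) ≤ ᾱ(∑ μᵢ sᵢ)` for all `sᵢ ≥ 0`. -/
theorem stmt_6
    (N : ℕ) (hN : 1 ≤ N)
    (α αinv : Fin N → ℝ → ℝ) (μ : Fin N → ℝ)
    (hα : ∀ i, ClassKInf (α i)) (hμ : ∀ i, 0 < μ i)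
    -- `αinv i` is the inverse of `α i` on `[0,∞)`
    (hαinv : ∀ i, ∀ s ≥ (0:ℝ), α i (αinv i s) = s ∧ αinv i (α i s) = s ∧ 0 ≤ αinv i s)
    (A : ℝ → Set ℝ)
    (hA : ∀ s, A s = {v : ℝ | ∃ sv : Fin N → ℝ,
      (∀ i, 0 ≤ sv i) ∧ (∑ i, μ i * sv i) = s ∧ v = ∑ i, αinv i (sv i)})
    (abar : ℝ → ℝ) (habar : ∀ s, abar s = sSup (A s)) :
    (∀ s ≥ (0:ℝ), ∃ v ∈ A s, ∀ v' ∈ A s, v' ≤ v) ∧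
    ClassKInf abar ∧
    (∀ sv : Fin N → ℝ, (∀ i, 0 ≤ sv i) →
      ∑ i, αinv i (sv i) ≤ abar (∑ i, μ i * sv i)) := by
  have hβ : ∀ i, ClassKInf (αinv i) := fun i =>
    classKInf_of_invOn (hα i).1.strictMonoOn (hα i).1.mapsTo_Ici
      (fun s hs => (hαinv i s hs).2.2)
      ⟨fun s hs => (hαinv i s hs).2.1, fun s hs => (hαinv i s hs).1⟩
  obtain rfl : A = sumValues αinv μ := funext fun s => by
    simp only [hA, sumValues, weightedSimplex, Set.image, Set.mem_ofPred_eq, Pi.le_def,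
      Pi.zero_apply, and_assoc, eq_comm]
  obtain rfl : abar = maxSum αinv μ := funext habar
  obtain ⟨hgreatest, hKInf, hle⟩ :=
    stmt_6_general (fun i => (hβ i).1) ⟨⟨0, hN⟩, (hβ _).2⟩ hμ
  exact ⟨fun s hs => ⟨_, hgreatest s hs⟩, hKInf, hle⟩
end
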